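/- arXiv:2605.03681 — 8 statements merged into one kernel-verified Lean document; each statement's English description precedes it below -/
import Mathlib

section
/- Let (X,d) be a compact metric space of negative type. Then the similarity form is positive definite on signed measures: for every finite signed Borel measure μ on X one has ⟨μ,μ⟩_W = ∬ e^{−d(x,y)} dμ(x) dμ(y) ≥ 0, and ⟨μ,μ⟩_W = 0 implies μ = 0. -/
open MeasureTheory Real

/-- Integral of a function against a finite signed Borel measure,
via the Jordan decomposition. -/
noncomputable def sInt {X : Type*} [MeasurableSpace X]
    (μ : SignedMeasure X) (f : X → ℝ) : ℝ :=
  (∫ x, f x ∂μ.toJordanDecomposition.posPart) -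
  (∫ x, f x ∂μ.toJordanDecomposition.negPart)

/-- The similarity form ⟨μ,ν⟩_W = ∬ e^{-d(x,y)} dμ(x) dν(y). -/
noncomputable def simForm {X : Type*} [MetricSpace X] [MeasurableSpace X]
    (μ ν : SignedMeasure X) : ℝ :=
  sInt μ (fun x => sInt ν (fun y => Real.exp (-dist x y)))

/-- Entrywise powers of a positive semidefinite real matrix are positive semidefinite. -/
theorem Matrix.PosSemidef.map_pow {ι : Type*} {A : Matrix ι ι ℝ} (hA : A.PosSemidef) (n : ℕ) :
    (A.map (· ^ n)).PosSemidef := by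
  induction n with
  | zero =>
    refine ⟨by ext; simp, fun f ↦ ?_⟩
    have h : (f.sum fun i xi ↦ f.sum fun j xj ↦
        star xi * A.map (fun a : ℝ ↦ a ^ 0) i j * xj) = (f.sum fun _ xi ↦ xi) ^ 2 := by
      simp [Finsupp.sum, sq, Finset.sum_mul_sum]
    rw [h]
    positivity
  | succ n ih =>
    have h : A.map (· ^ (n + 1)) = (A.map (· ^ n)).hadamard A := by
      ext i j
      simp [pow_succ]
    rw [h]
    exact ih.hadamard hA

/-- The entrywise exponential of a positive semidefinite real matrix is positive semidefinite. -/
theorem Matrix.PosSemidef.map_exp {ι : Type*} {A : Matrix ι ι ℝ} (hA : A.PosSemidef) :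
    (A.map Real.exp).PosSemidef := by
  refine ⟨by ext i j; simpa using hA.isHermitian.apply i j, fun f ↦ ?_⟩
  have h : HasSum (fun n : ℕ ↦ (n.factorial : ℝ)⁻¹ * f.sum fun i xi ↦ f.sum fun j xj ↦
      star xi * A.map (· ^ n) i j * xj)
      (f.sum fun i xi ↦ f.sum fun j xj ↦ star xi * A.map Real.exp i j * xj) := by
    simp only [Finsupp.sum, Finset.mul_sum]
    refine hasSum_sum fun i _ ↦ hasSum_sum fun j _ ↦ ?_
    have h := ((NormedSpace.expSeries_div_hasSum_exp (A i j)).mul_left (f i)).mul_right (f j)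
    rw [← Real.exp_eq_exp_ℝ] at h
    refine h.congr_fun fun n ↦ ?_
    simp only [Matrix.map_apply, star_trivial]
    ring
  exact h.nonneg fun n ↦ mul_nonneg (by positivity) ((hA.map_pow n).2 f)

universe u

/-- A positive semidefinite real matrix is the Gram matrix of vectors of a Hilbert space. -/
theorem Matrix.PosSemidef.exists_inner_eq {ι : Type u} {A : Matrix ι ι ℝ} (hA : A.PosSemidef) :
    ∃ (E : Type u) (_ : NormedAddCommGroup E) (_ : InnerProductSpace ℝ E) (_ : CompleteSpace E)
      (Ψ : ι → E), ∀ i j, inner ℝ (Ψ i) (Ψ j) = A i j := by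
  let K : Matrix ι ι (ℝ →L[ℝ] ℝ) := A.map fun a ↦ a • ContinuousLinearMap.id ℝ ℝ
  have hK : K.PosSemidef := by
    have h := (RKHS.posSemidef_tfae (K := K)).out 0 2
    refine h.mpr ⟨?_, fun f ↦ ?_⟩
    · ext i j
      simpa [K, ContinuousLinearMap.star_eq_adjoint, ContinuousLinearMap.adjoint_id] using
        hA.isHermitian.apply i j
    · refine (hA.2 f).trans_eq ?_
      simp only [Finsupp.sum, RCLike.re_to_real]
      refine Finset.sum_congr rfl fun i _ ↦ Finset.sum_congr rfl fun j _ ↦ ?_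
      have hij : A j i = A i j := by simpa using hA.isHermitian.apply i j
      simp [K, hij]
      ring
  have : Fact K.PosSemidef := ⟨hK⟩
  refine ⟨RKHS.OfKernel K, inferInstance, inferInstance, inferInstance,
    fun i ↦ RKHS.kerFun (RKHS.OfKernel K) i 1, fun i j ↦ ?_⟩
  rw [← RKHS.kernel_inner, RKHS.OfKernel.kernel_ofKernel]
  simpa [K] using hA.isHermitian.apply i j

/-- A map into an inner product space is continuous if its Gram kernel is. -/
theorem continuous_of_continuous_inner {T E : Type*} [TopologicalSpace T] [NormedAddCommGroup E]
    [InnerProductSpace ℝ E] {Ψ : T → E}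
    (h : Continuous fun p : T × T ↦ inner ℝ (Ψ p.1) (Ψ p.2)) : Continuous Ψ := by
  refine continuous_iff_continuousAt.2 fun x ↦ ?_
  rw [ContinuousAt, tendsto_iff_norm_sub_tendsto_zero]
  have h₁ : Continuous fun y ↦ inner ℝ (Ψ y) (Ψ y) := h.comp (continuous_id.prodMk continuous_id)
  have h₂ : Continuous fun y ↦ inner ℝ (Ψ y) (Ψ x) := h.comp (continuous_id.prodMk continuous_const)
  have h₃ : Continuous fun y ↦ ‖Ψ y - Ψ x‖ := by
    have h₄ : Continuous fun y ↦ √(inner ℝ (Ψ y) (Ψ y) - 2 * inner ℝ (Ψ y) (Ψ x)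
        + inner ℝ (Ψ x) (Ψ x)) := by fun_prop
    refine h₄.congr fun y ↦ ?_
    rw [real_inner_self_eq_norm_sq, real_inner_self_eq_norm_sq, ← norm_sub_sq_real,
      Real.sqrt_sq (norm_nonneg _)]
  simpa using h₃.tendsto x

section SignedIntegral

variable {X : Type*} [TopologicalSpace X] [CompactSpace X] [MeasurableSpace X] [BorelSpace X]

theorem continuous_integral_continuousMap (P : Measure X) [IsFiniteMeasure P] :
    Continuous fun f : C(X, ℝ) ↦ ∫ x, f x ∂P := by
  have h : Continuous fun f : C(X, ℝ) ↦ ∫ x, (ContinuousMap.toLp 1 P ℝ f : X → ℝ) x ∂P :=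
    continuous_integral.comp (ContinuousMap.toLp 1 P ℝ).continuous
  exact h.congr fun f ↦ integral_congr_ae (ContinuousMap.coeFn_toLp P f)

theorem ContinuousMap.integrable_of_isFiniteMeasure (P : Measure X) [IsFiniteMeasure P]
    (f : C(X, ℝ)) : Integrable f P :=
  f.continuous.integrable_of_hasCompactSupport (HasCompactSupport.of_compactSpace f)

/-- Integration of continuous functions against a signed measure, as a continuous linear form. -/
noncomputable def sIntCLM (μ : SignedMeasure X) : C(X, ℝ) →L[ℝ] ℝ where
  toFun f := sInt μ f
  map_add' f g := by
    have h (P : Measure X) [IsFiniteMeasure P] :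
        ∫ x, (f + g) x ∂P = (∫ x, f x ∂P) + ∫ x, g x ∂P :=
      integral_add (f.integrable_of_isFiniteMeasure P) (g.integrable_of_isFiniteMeasure P)
    simp only [sInt, h]
    ring
  map_smul' c f := by
    simp only [sInt, ContinuousMap.smul_apply, smul_eq_mul, integral_const_mul, RingHom.id_apply]
    ring
  cont := (continuous_integral_continuousMap _).sub (continuous_integral_continuousMap _)

@[simp]
theorem sIntCLM_apply (μ : SignedMeasure X) (f : C(X, ℝ)) : sIntCLM μ f = sInt μ f := rfl

/-- A finite signed measure that integrates every continuous function to zero vanishes. -/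
theorem eq_zero_of_sIntCLM_eq_zero [HasOuterApproxClosed X] {μ : SignedMeasure X}
    (h : sIntCLM μ = 0) : μ = 0 := by
  have hPN : μ.toJordanDecomposition.posPart = μ.toJordanDecomposition.negPart := by
    refine ext_of_forall_integral_eq_of_IsFiniteMeasure fun f ↦ sub_eq_zero.1 ?_
    exact DFunLike.congr_fun h f.toContinuousMap
  rw [← μ.toSignedMeasure_toJordanDecomposition, JordanDecomposition.toSignedMeasure]
  simp [hPN]

variable {E : Type*} [NormedAddCommGroup E] [InnerProductSpace ℝ E] [CompleteSpace E]

/-- Integral of a vector-valued function against a signed measure. -/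
noncomputable def sMean (μ : SignedMeasure X) (F : X → E) : E :=
  (∫ x, F x ∂μ.toJordanDecomposition.posPart) - ∫ x, F x ∂μ.toJordanDecomposition.negPart

theorem sInt_inner [SecondCountableTopology X] [T2Space X]
    (μ : SignedMeasure X) {F : X → E} (hF : Continuous F) (v : E) :
    sInt μ (fun x ↦ inner ℝ v (F x)) = inner ℝ v (sMean μ F) := by
  have h (P : Measure X) [IsFiniteMeasure P] : Integrable F P :=
    hF.integrable_of_hasCompactSupport (HasCompactSupport.of_compactSpace F)
  rw [sInt, sMean, inner_sub_right, integral_inner (h _), integral_inner (h _)]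

end SignedIntegral

/-- The exponentials `x ↦ exp (2 ⟪φ x, a⟫)` as a monoid homomorphism in `a`. -/
noncomputable def expInnerHom {X H : Type*} [TopologicalSpace X] [NormedAddCommGroup H]
    [InnerProductSpace ℝ H] (φ : C(X, H)) : Multiplicative H →* C(X, ℝ) where
  toFun a := ⟨fun x ↦ Real.exp (2 * inner ℝ (φ x) a.toAdd), by fun_prop⟩
  map_one' := by ext; simp
  map_mul' a b := by ext; simp [inner_add_right, mul_add, Real.exp_add]

/-- On a compact space embedded in a Hilbert space, the exponentials span a dense subspace of the
continuous functions. -/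
theorem dense_span_range_expInnerHom {X H : Type*} [TopologicalSpace X] [CompactSpace X]
    [NormedAddCommGroup H] [InnerProductSpace ℝ H] (φ : C(X, H)) (hφ : Function.Injective φ) :
    (Submodule.span ℝ (Set.range (expInnerHom φ))).topologicalClosure = ⊤ := by
  have hsep : (Algebra.adjoin ℝ (Set.range (expInnerHom φ))).SeparatesPoints := by
    intro x y hxy
    refine ⟨_, ⟨expInnerHom φ (.ofAdd (φ x - φ y)), Algebra.subset_adjoin ⟨_, rfl⟩, rfl⟩,
      fun h ↦ hxy (hφ ?_)⟩
    have h' : inner ℝ (φ x) (φ x - φ y) = inner ℝ (φ y) (φ x - φ y) := by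
      simpa [expInnerHom] using h
    rw [← sub_eq_zero, ← inner_sub_left, inner_self_eq_zero, sub_eq_zero] at h'
    exact h'
  have h := congrArg Subalgebra.toSubmodule
    (ContinuousMap.subalgebra_topologicalClosure_eq_top_of_separatesPoints _ hsep)
  have hspan : Subalgebra.toSubmodule (Algebra.adjoin ℝ (Set.range (expInnerHom φ)))
      = Submodule.span ℝ (Set.range (expInnerHom φ)) := by
    rw [Algebra.adjoin_eq_span, ← MonoidHom.coe_mrange, Submonoid.closure_eq]
  rw [← hspan]
  exact h

/-- A signed measure on a compact space of which all transforms
`a ↦ ∫ w x * exp (2 ⟪φ x, a⟫) dμ x` vanish, with `φ` injective and `w` positive, is zero. -/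
theorem eq_zero_of_sInt_exp_inner_eq_zero {X H : Type*} [TopologicalSpace X] [CompactSpace X]
    [MeasurableSpace X] [BorelSpace X] [HasOuterApproxClosed X]
    [NormedAddCommGroup H] [InnerProductSpace ℝ H] (φ : C(X, H)) (hφ : Function.Injective φ)
    (w : C(X, ℝ)) (hw : ∀ x, 0 < w x) {μ : SignedMeasure X}
    (h : ∀ a, sInt μ (fun x ↦ w x * Real.exp (2 * inner ℝ (φ x) a)) = 0) : μ = 0 := by
  have hL : sIntCLM μ ∘L ContinuousLinearMap.mul ℝ C(X, ℝ) w = 0 := by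
    refine ContinuousLinearMap.ext_on
      (Submodule.dense_iff_topologicalClosure_eq_top.2 (dense_span_range_expInnerHom φ hφ)) ?_
    rintro _ ⟨a, rfl⟩
    exact h a.toAdd
  refine eq_zero_of_sIntCLM_eq_zero (ContinuousLinearMap.ext fun f ↦ ?_)
  let g : C(X, ℝ) := ⟨fun x ↦ (w x)⁻¹ * f x,
    (w.continuous.inv₀ fun x ↦ (hw x).ne').mul f.continuous⟩
  have hg : w * g = f := by
    ext x
    simp [g, (hw x).ne']
  have := DFunLike.congr_fun hL g
  simpa [hg] using this

/-- The inner product of a real inner product space is a positive semidefinite kernel. -/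
theorem posSemidef_inner {H : Type*} [NormedAddCommGroup H] [InnerProductSpace ℝ H] :
    (Matrix.of fun a b : H ↦ inner ℝ a b).PosSemidef := by
  refine ⟨by ext a b; simp [real_inner_comm], fun f ↦ ?_⟩
  have h : (f.sum fun i xi ↦ f.sum fun j xj ↦
      star xi * (Matrix.of fun a b : H ↦ inner ℝ a b) i j * xj)
        = ‖f.sum fun i xi ↦ xi • i‖ ^ 2 := by
    simp only [← real_inner_self_eq_norm_sq, Finsupp.sum, sum_inner, inner_sum,
      real_inner_smul_left, real_inner_smul_right, Matrix.of_apply, star_trivial]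
    refine Finset.sum_congr rfl fun i _ ↦ Finset.sum_congr rfl fun j _ ↦ ?_
    rw [real_inner_comm i j]
    ring
  rw [h]
  positivity

theorem stmt0 {X : Type*} [MetricSpace X] [CompactSpace X]
    [MeasurableSpace X] [BorelSpace X]
    {H : Type*} [NormedAddCommGroup H] [InnerProductSpace ℝ H] [CompleteSpace H]
    (φ : X → H) (hφ : ∀ x y : X, ‖φ x - φ y‖ ^ 2 = dist x y)
    (μ : SignedMeasure X) :
    0 ≤ simForm μ μ ∧ (simForm μ μ = 0 → μ = 0) := by
  have hcont : Continuous φ := by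
    refine continuous_iff_continuousAt.2 fun x ↦ ?_
    rw [ContinuousAt, tendsto_iff_norm_sub_tendsto_zero]
    have h : Continuous fun y ↦ ‖φ y - φ x‖ := by
      have h' : Continuous fun y ↦ √(dist y x) := by fun_prop
      refine h'.congr fun y ↦ ?_
      rw [← hφ, Real.sqrt_sq (norm_nonneg _)]
    simpa using h.tendsto x
  have hinj : Function.Injective φ := fun x y hxy ↦ by simpa [hxy] using (hφ x y).symm
  have hpsd : (Matrix.of fun a b : H ↦ 2 * inner ℝ a b).PosSemidef :=
    posSemidef_inner.smul (zero_le_two (α := ℝ))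
  obtain ⟨E, _, _, _, Ψ, hΨ⟩ := hpsd.map_exp.exists_inner_eq
  simp only [Matrix.map_apply, Matrix.of_apply] at hΨ
  have hΨc : Continuous Ψ := continuous_of_continuous_inner (by simp only [hΨ]; fun_prop)
  let w : C(X, ℝ) := ⟨fun x ↦ Real.exp (-‖φ x‖ ^ 2), by fun_prop⟩
  let F : X → E := fun x ↦ w x • Ψ (φ x)
  have hF : Continuous F := by fun_prop
  have hker (x y : X) : Real.exp (-dist x y) = inner ℝ (F x) (F y) := by
    simp only [F, w, real_inner_smul_left, real_inner_smul_right, hΨ, ContinuousMap.coe_mk,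
      ← Real.exp_add, ← hφ, norm_sub_sq_real]
    ring_nf
  have hform : simForm μ μ = ‖sMean μ F‖ ^ 2 := by
    rw [← real_inner_self_eq_norm_sq, ← sInt_inner μ hF, simForm]
    simp only [hker, sInt_inner μ hF, real_inner_comm]
  refine ⟨hform ▸ sq_nonneg _, fun h0 ↦ ?_⟩
  have hm : sMean μ F = 0 := by simpa [hform] using h0
  refine eq_zero_of_sInt_exp_inner_eq_zero ⟨φ, hcont⟩ hinj w (fun x ↦ Real.exp_pos _) fun a ↦ ?_
  have h := sInt_inner μ hF (Ψ a)
  rw [hm, inner_zero_right] at h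
  simpa [F, real_inner_smul_right, hΨ, real_inner_comm] using h
end

section
/- Let (X,d) be a compact metric space of negative type. Then X has at most one diversity-maximizing measure: if μ and ν are Borel probability measures on X that both minimize ρ ↦ ⟨ρ,ρ⟩_W over Borel probability measures, then μ = ν. -/
open MeasureTheory Real

/-- The similarity form ⟨μ,ν⟩_W = ∬ e^{-d(x,y)} dμ(x) dν(y) for (nonnegative) Borel
measures. -/
noncomputable def simFormP {X : Type*} [MetricSpace X] [MeasurableSpace X]
    (μ ν : Measure X) : ℝ :=
  ∫ x, ∫ y, Real.exp (-dist x y) ∂ν ∂μ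

open scoped InnerProductSpace Topology Matrix

/-- Positive semidefiniteness is preserved by pointwise limits. -/
theorem posSemidef_of_tendsto {ι : Type*} {A : ℕ → Matrix ι ι ℝ} {B : Matrix ι ι ℝ}
    (hA : ∀ n, (A n).PosSemidef)
    (hlim : ∀ i j, Filter.Tendsto (fun n ↦ A n i j) Filter.atTop (𝓝 (B i j))) :
    B.PosSemidef := by
  refine ⟨?_, fun x ↦ ?_⟩
  · ext i j
    exact tendsto_nhds_unique (hlim j i)
      ((hlim i j).congr fun n ↦ (hA n).isHermitian.apply j i)
  · refine ge_of_tendsto' (x := Filter.atTop)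
      (f := fun n ↦ x.sum fun i xi ↦ x.sum fun j xj ↦ star xi * A n i j * xj)
      ?_ fun n ↦ (hA n).2 x
    exact tendsto_finsetSum _ fun i _ ↦ tendsto_finsetSum _ fun j _ ↦
      ((hlim i j).const_mul _).mul_const _

/-- The kernel of inner products of a family of vectors is positive semidefinite. -/
theorem posSemidef_inner_s5 {ι E : Type*} [NormedAddCommGroup E] [InnerProductSpace ℝ E]
    (v : ι → E) : (Matrix.of fun i j ↦ ⟪v i, v j⟫_ℝ).PosSemidef := by
  refine ⟨?_, fun x ↦ ?_⟩
  · ext i j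
    simp [real_inner_comm]
  · have h := real_inner_self_nonneg (x := x.sum fun i xi ↦ xi • v i)
    simp only [Finsupp.sum, sum_inner, inner_sum, real_inner_smul_left, real_inner_smul_right] at h
    refine h.trans_eq (Finset.sum_congr rfl fun i _ ↦ Finset.sum_congr rfl fun j _ ↦ ?_)
    simp only [star_trivial, Matrix.of_apply, real_inner_comm (v i) (v j)]
    ring

/-- The entrywise exponential of a positive semidefinite matrix is positive semidefinite. -/
theorem posSemidef_map_exp {ι : Type*} {A : Matrix ι ι ℝ} (hA : A.PosSemidef) :
    (Matrix.of fun i j ↦ Real.exp (A i j)).PosSemidef := by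
  have hpow : ∀ n : ℕ, (Matrix.of fun i j ↦ A i j ^ n).PosSemidef := by
    intro n
    induction n with
    | zero =>
      simpa using posSemidef_inner_s5 fun _ : ι ↦ (1 : ℝ)
    | succ n ih =>
      have h := ih.hadamard hA
      simp only [pow_succ]
      exact h
  have hsum : ∀ n : ℕ,
      (∑ k ∈ Finset.range n, ((k.factorial : ℝ)⁻¹ • Matrix.of fun i j ↦ A i j ^ k)).PosSemidef :=
    fun n ↦ Matrix.posSemidef_sum _ fun k _ ↦ (hpow k).smul (by positivity)
  refine posSemidef_of_tendsto hsum fun i j ↦ ?_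
  have h := (NormedSpace.expSeries_div_hasSum_exp (A i j)).tendsto_sum_nat
  rw [← Real.exp_eq_exp_ℝ] at h
  refine h.congr fun n ↦ ?_
  simp [Matrix.sum_apply, div_eq_inv_mul]

theorem exp_neg_norm_sub_sq {H : Type*} [NormedAddCommGroup H] [InnerProductSpace ℝ H] (x y : H) :
    Real.exp (-‖x - y‖ ^ 2) =
      Real.exp (-‖x‖ ^ 2) * Real.exp (-‖y‖ ^ 2) * Real.exp (2 * ⟪x, y⟫_ℝ) := by
  rw [← Real.exp_add, ← Real.exp_add, norm_sub_sq_real]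
  ring_nf

/-- The Gaussian kernel on a real inner product space is positive semidefinite. -/
theorem posSemidef_gaussianKernel (H : Type*) [NormedAddCommGroup H] [InnerProductSpace ℝ H] :
    (Matrix.of fun x y : H ↦ Real.exp (-‖x - y‖ ^ 2)).PosSemidef := by
  have hexp := posSemidef_map_exp
    ((posSemidef_inner_s5 fun x : H ↦ x).smul (show (0 : ℝ) ≤ 2 by norm_num))
  have hfactor : (Matrix.of fun x y : H ↦ Real.exp (-‖x - y‖ ^ 2)) =
      (Matrix.of fun x y : H ↦ ⟪Real.exp (-‖x‖ ^ 2), Real.exp (-‖y‖ ^ 2)⟫_ℝ) ⊙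
        Matrix.of fun x y : H ↦ Real.exp (((2 : ℝ) • Matrix.of fun x y : H ↦ ⟪x, y⟫_ℝ) x y) := by
    ext x y
    simp [exp_neg_norm_sub_sq, mul_comm]
  rw [hfactor]
  exact (posSemidef_inner_s5 fun x : H ↦ Real.exp (-‖x‖ ^ 2)).hadamard hexp

/-- A positive semidefinite real kernel has a feature map into a Hilbert space. -/
theorem Matrix.PosSemidef.exists_featureMap.{u} {ι : Type u} {A : Matrix ι ι ℝ}
    (hA : A.PosSemidef) :
    ∃ (F : Type u) (_ : NormedAddCommGroup F) (_ : InnerProductSpace ℝ F) (_ : CompleteSpace F)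
      (Φ : ι → F), ∀ i j, ⟪Φ i, Φ j⟫_ℝ = A i j := by
  let K : Matrix ι ι (ℝ →L[ℝ] ℝ) := Matrix.of fun i j ↦ A i j • ContinuousLinearMap.id ℝ ℝ
  have hK : K.PosSemidef := by
    have htfae := (RKHS.posSemidef_tfae (K := K)).out 0 2
    refine htfae.mpr ⟨?_, fun v ↦ ?_⟩
    · ext i j
      simp [K, Matrix.conjTranspose_apply, ← hA.isHermitian.apply i j,
        ← ContinuousLinearMap.one_def]
    · refine (hA.2 v).trans_eq (Finset.sum_congr rfl fun i _ ↦ Finset.sum_congr rfl fun j _ ↦ ?_)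
      beta_reduce
      rw [← hA.isHermitian.apply i j]
      simp [K]
      ring
  have : Fact K.PosSemidef := ⟨hK⟩
  refine ⟨RKHS.OfKernel K, inferInstance, inferInstance, inferInstance,
    fun i ↦ RKHS.kerFun (RKHS.OfKernel K) i 1, fun i j ↦ ?_⟩
  rw [← RKHS.kernel_inner, RKHS.OfKernel.kernel_ofKernel, ← hA.isHermitian.apply i j]
  simp [K]

/-- A continuous function on a compact metric space is integrable for a finite measure. -/
theorem Continuous.integrable_of_compactSpace {X E : Type*} [MetricSpace X] [CompactSpace X]
    [MeasurableSpace X] [BorelSpace X] [NormedAddCommGroup E] {f : X → E} (hf : Continuous f)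
    (μ : Measure X) [IsFiniteMeasure μ] : Integrable f μ :=
  hf.integrable_of_hasCompactSupport (HasCompactSupport.of_compactSpace f)

theorem inner_integral_integral {X F : Type*} [MeasurableSpace X] [NormedAddCommGroup F]
    [InnerProductSpace ℝ F] [CompleteSpace F] {Ψ : X → F} {μ ν : Measure X}
    (hμ : Integrable Ψ μ) (hν : Integrable Ψ ν) :
    ⟪∫ x, Ψ x ∂μ, ∫ y, Ψ y ∂ν⟫_ℝ = ∫ x, ∫ y, ⟪Ψ x, Ψ y⟫_ℝ ∂ν ∂μ := by
  rw [real_inner_comm, ← integral_inner hμ]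
  refine integral_congr_ae (.of_forall fun x ↦ ?_)
  simp only
  rw [integral_inner hν, real_inner_comm]

/-- Two finite measures on a compact metric space agree if they give the same integrals to
`w * exp ⟪φ, a⟫` for all vectors `a`, where `w` is nowhere zero and `φ` is injective. -/
theorem measure_eq_of_integral_weight_mul_exp_inner_eq {X H : Type*} [MetricSpace X]
    [CompactSpace X] [MeasurableSpace X] [BorelSpace X] [NormedAddCommGroup H]
    [InnerProductSpace ℝ H] {φ : X → H} (hφ : Continuous φ) (hinj : Function.Injective φ)
    {w : X → ℝ} (hw : Continuous w) (hw0 : ∀ x, w x ≠ 0)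
    {μ ν : Measure X} [IsFiniteMeasure μ] [IsFiniteMeasure ν]
    (h : ∀ a : H, ∫ x, w x * Real.exp ⟪φ x, a⟫_ℝ ∂μ = ∫ x, w x * Real.exp ⟪φ x, a⟫_ℝ ∂ν) :
    μ = ν := by
  let W : C(X, ℝ) := ⟨w, hw⟩
  let e : Multiplicative H →* C(X, ℝ) :=
    { toFun := fun a ↦ ⟨fun x ↦ Real.exp ⟪φ x, a.toAdd⟫_ℝ, by fun_prop⟩
      map_one' := by ext x; simp
      map_mul' := fun a b ↦ by ext x; simp [inner_add_right, Real.exp_add] }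
  have hcont : ∀ (ρ : Measure X) [IsFiniteMeasure ρ],
      Continuous fun f : C(X, ℝ) ↦ ∫ x, (W * f) x ∂ρ := by
    intro ρ _
    have hc : Continuous fun f : C(X, ℝ) ↦ ∫ x, ContinuousMap.toLp (E := ℝ) 1 ρ ℝ (W * f) x ∂ρ :=
      continuous_integral.comp ((ContinuousMap.toLp (E := ℝ) 1 ρ ℝ).continuous.comp
        (continuous_const.mul continuous_id))
    exact hc.congr fun f ↦ integral_congr_ae (ContinuousMap.coeFn_toLp ρ (W * f))
  have hint : ∀ (ρ : Measure X) [IsFiniteMeasure ρ] (f : C(X, ℝ)),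
      Integrable (fun x ↦ W x * f x) ρ :=
    fun ρ _ f ↦ (hw.mul f.continuous).integrable_of_compactSpace ρ
  let A : Subalgebra ℝ C(X, ℝ) := Algebra.adjoin ℝ (MonoidHom.mrange e : Set C(X, ℝ))
  have hsep : A.SeparatesPoints := by
    intro x y hxy
    by_contra hne
    refine hxy (hinj (ext_inner_right ℝ fun a ↦ Real.exp_injective ?_))
    by_contra hexp
    exact hne ⟨_, ⟨e (Multiplicative.ofAdd a), Algebra.subset_adjoin ⟨_, rfl⟩, rfl⟩, hexp⟩
  have hA : ∀ f ∈ A, ∫ x, (W * f) x ∂μ = ∫ x, (W * f) x ∂ν := by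
    intro f hf
    rw [← Subalgebra.mem_toSubmodule, Algebra.adjoin_eq_span, Submonoid.closure_eq] at hf
    induction hf using Submodule.span_induction with
    | mem f hf =>
      obtain ⟨a, rfl⟩ := hf
      exact h a.toAdd
    | zero => simp
    | add f g _ _ hf hg =>
      simp only [mul_add, ContinuousMap.add_apply, ContinuousMap.mul_apply] at hf hg ⊢
      rw [integral_add (hint μ f) (hint μ g), integral_add (hint ν f) (hint ν g)]
      exact congrArg₂ _ hf hg
    | smul c f _ hf =>
      simp only [mul_smul_comm, ContinuousMap.smul_apply, integral_smul, hf]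
  have hall : ∀ f : C(X, ℝ), ∫ x, (W * f) x ∂μ = ∫ x, (W * f) x ∂ν := by
    have hdense := ContinuousMap.subalgebra_topologicalClosure_eq_top_of_separatesPoints A hsep
    intro f
    have hf : f ∈ closure (A : Set C(X, ℝ)) := by
      rw [← Subalgebra.topologicalClosure_coe, hdense]
      trivial
    exact closure_minimal (t := {f | _}) hA (isClosed_eq (hcont μ) (hcont ν)) hf
  refine ext_of_forall_integral_eq_of_IsFiniteMeasure fun f ↦ ?_
  have hf := hall ⟨fun x ↦ (w x)⁻¹ * f x, (hw.inv₀ hw0).mul f.continuous⟩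
  simpa [W, mul_inv_cancel_left₀ (hw0 _)] using hf

/-- Two vectors whose norms do not exceed the norm of their midpoint coincide. -/
theorem eq_of_inner_self_le_inner_self_midpoint {F : Type*} [NormedAddCommGroup F]
    [InnerProductSpace ℝ F] {u v : F}
    (hu : ⟪u, u⟫_ℝ ≤ ⟪(2 : ℝ)⁻¹ • (u + v), (2 : ℝ)⁻¹ • (u + v)⟫_ℝ)
    (hv : ⟪v, v⟫_ℝ ≤ ⟪(2 : ℝ)⁻¹ • (u + v), (2 : ℝ)⁻¹ • (u + v)⟫_ℝ) : u = v := by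
  rw [← sub_eq_zero, ← real_inner_self_nonpos]
  simp only [inner_smul_left, inner_smul_right, inner_add_left, inner_add_right, inner_sub_left,
    inner_sub_right, real_inner_comm u v, map_inv₀, RCLike.conj_to_real] at hu hv ⊢
  norm_num at hu hv ⊢
  linarith

theorem stmt5 {X : Type*} [MetricSpace X] [CompactSpace X]
    [MeasurableSpace X] [BorelSpace X]
    {H : Type*} [NormedAddCommGroup H] [InnerProductSpace ℝ H] [CompleteSpace H]
    (φ : X → H) (hφ : ∀ x y : X, ‖φ x - φ y‖ ^ 2 = dist x y)
    (μ ν : Measure X) (hμ : IsProbabilityMeasure μ) (hν : IsProbabilityMeasure ν)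
    (hμmin : ∀ ρ : Measure X, IsProbabilityMeasure ρ → simFormP μ μ ≤ simFormP ρ ρ)
    (hνmin : ∀ ρ : Measure X, IsProbabilityMeasure ρ → simFormP ν ν ≤ simFormP ρ ρ) :
    μ = ν := by
  have hdist : ∀ x y, dist (φ x) (φ y) = √(dist x y) := fun x y ↦ by
    rw [dist_eq_norm, ← hφ, Real.sqrt_sq (norm_nonneg _)]
  have hcont : Continuous φ := continuous_iff_continuousAt.mpr fun x ↦ by
    refine tendsto_iff_dist_tendsto_zero.mpr ?_
    simp only [hdist]
    have : Continuous fun y ↦ √(dist y x) := by fun_prop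
    simpa using this.tendsto x
  have hinj : Function.Injective φ := fun x y hxy ↦ by
    rw [← dist_eq_zero, ← hφ, hxy]
    simp
  obtain ⟨F, _, _, _, Φ, hΦ⟩ := (posSemidef_gaussianKernel H).exists_featureMap
  simp only [Matrix.of_apply] at hΦ
  have hΦcont : Continuous Φ := continuous_iff_continuousAt.mpr fun x ↦ by
    have hnorm : ∀ y, ‖Φ y - Φ x‖ = √(2 - 2 * Real.exp (-‖y - x‖ ^ 2)) := fun y ↦ by
      rw [← Real.sqrt_sq (norm_nonneg (Φ y - Φ x)), ← real_inner_self_eq_norm_sq]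
      simp only [inner_sub_left, inner_sub_right, hΦ, norm_sub_rev x y]
      congr 1
      simp
      ring
    refine tendsto_iff_norm_sub_tendsto_zero.mpr ?_
    simp only [hnorm]
    have : Continuous fun y ↦ √(2 - 2 * Real.exp (-‖y - x‖ ^ 2)) := by fun_prop
    simpa using this.tendsto x
  have hint : ∀ (ρ : Measure X) [IsFiniteMeasure ρ], Integrable (fun x ↦ Φ (φ x)) ρ :=
    fun ρ _ ↦ (hΦcont.comp hcont).integrable_of_compactSpace ρ
  have hsim : ∀ (ρ : Measure X) [IsFiniteMeasure ρ],
      simFormP ρ ρ = ⟪∫ x, Φ (φ x) ∂ρ, ∫ x, Φ (φ x) ∂ρ⟫_ℝ := fun ρ _ ↦ by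
    rw [inner_integral_integral (hint ρ) (hint ρ)]
    simp only [hΦ, hφ, simFormP]
  let ρ : Measure X := (2⁻¹ : NNReal) • (μ + ν)
  have hρ : IsProbabilityMeasure ρ := ⟨by
    simp only [ρ, Measure.smul_apply, Measure.add_apply, measure_univ, one_add_one_eq_two,
      ENNReal.smul_def, smul_eq_mul]
    rw [ENNReal.coe_inv two_ne_zero]
    exact ENNReal.inv_mul_cancel two_ne_zero ENNReal.ofNat_ne_top⟩
  have hρint : ∫ x, Φ (φ x) ∂ρ = (2 : ℝ)⁻¹ • (∫ x, Φ (φ x) ∂μ + ∫ x, Φ (φ x) ∂ν) := by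
    rw [integral_smul_nnreal_measure, integral_add_measure (hint μ) (hint ν)]
    simp [NNReal.smul_def]
  have hμρ := hμmin ρ hρ
  have hνρ := hνmin ρ hρ
  rw [hsim, hsim, hρint] at hμρ hνρ
  have hmean := eq_of_inner_self_le_inner_self_midpoint hμρ hνρ
  have hgauss : ∀ (ρ : Measure X) [IsFiniteMeasure ρ] (a : H),
      ∫ x, Real.exp (-‖φ x‖ ^ 2) * Real.exp ⟪φ x, a⟫_ℝ ∂ρ =
        Real.exp (‖(2 : ℝ)⁻¹ • a‖ ^ 2) * ⟪Φ ((2 : ℝ)⁻¹ • a), ∫ x, Φ (φ x) ∂ρ⟫_ℝ := by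
    intro ρ _ a
    rw [← integral_inner (hint ρ), ← integral_const_mul]
    refine integral_congr_ae (.of_forall fun x ↦ ?_)
    simp only
    rw [hΦ, exp_neg_norm_sub_sq, real_inner_smul_left, real_inner_comm,
      mul_inv_cancel_left₀ two_ne_zero, Real.exp_neg (‖(2 : ℝ)⁻¹ • a‖ ^ 2)]
    field_simp
  refine measure_eq_of_integral_weight_mul_exp_inner_eq hcont hinj
    (w := fun x ↦ Real.exp (-‖φ x‖ ^ 2)) (by fun_prop) (fun x ↦ (Real.exp_pos _).ne') fun a ↦ ?_
  rw [hgauss, hgauss, hmean]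
end

section
/- Let (Z,d) be a metric space and X, Y ⊆ Z subsets with X ∪ Y = Z and X ∩ Y = {a} for some point a, such that d(x,y) = d(x,a) + d(a,y) for every x ∈ X and y ∈ Y. If X and Y, equipped with the induced metrics, are both of negative type, then Z is of negative type. -/
/-- A witness that a metric space is of negative type: an isometric embedding of
`(X, √d)` into a real Hilbert space. -/
structure NegTypeWitness (X : Type*) [MetricSpace X] where
  H : Type
  [grp : NormedAddCommGroup H]
  [inn : InnerProductSpace ℝ H]
  [comp : CompleteSpace H]
  φ : X → H
  isom : ∀ x y : X, ‖φ x - φ y‖ ^ 2 = dist x y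

/-- A metric space is of negative type if `(X, √d)` embeds isometrically into a real
Hilbert space. -/
def IsOfNegativeType (X : Type*) [MetricSpace X] : Prop :=
  Nonempty (NegTypeWitness X)

theorem stmt9 {Z : Type*} [MetricSpace Z] (X Y : Set Z) (a : Z)
    (hunion : X ∪ Y = Set.univ) (hinter : X ∩ Y = {a})
    (hadd : ∀ x ∈ X, ∀ y ∈ Y, dist x y = dist x a + dist a y)
    (hX : IsOfNegativeType X) (hY : IsOfNegativeType Y) :
    IsOfNegativeType Z := by
  classical
  obtain ⟨HX, φX, isomX⟩ := hX
  obtain ⟨HY, φY, isomY⟩ := hY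
  have ha : a ∈ X ∩ Y := hinter ▸ Set.mem_singleton a
  have eq_a : ∀ z, z ∈ X → z ∈ Y → z = a := fun z hzX hzY => by
    have hz : z ∈ X ∩ Y := ⟨hzX, hzY⟩
    rwa [hinter] at hz
  -- Extend each embedding to `Z` by collapsing the other subspace to the base point.
  let f : Z → HX := fun z => if h : z ∈ X then φX ⟨z, h⟩ else φX ⟨a, ha.1⟩
  let g : Z → HY := fun z => if h : z ∈ Y then φY ⟨z, h⟩ else φY ⟨a, ha.2⟩
  have hfX : ∀ z (h : z ∈ X), f z = φX ⟨z, h⟩ := fun z h => dif_pos h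
  have hgY : ∀ z (h : z ∈ Y), g z = φY ⟨z, h⟩ := fun z h => dif_pos h
  have hfY : ∀ z ∈ Y, f z = φX ⟨a, ha.1⟩ := fun z h => by
    by_cases hz : z ∈ X
    · obtain rfl := eq_a z hz h
      exact hfX z hz
    · exact dif_neg hz
  have hgX : ∀ z ∈ X, g z = φY ⟨a, ha.2⟩ := fun z h => by
    by_cases hz : z ∈ Y
    · obtain rfl := eq_a z h hz
      exact hgY z hz
    · exact dif_neg hz
  have cover : ∀ z, z ∈ X ∨ z ∈ Y := fun z => by
    simpa [← hunion] using Set.mem_univ z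
  refine ⟨⟨WithLp 2 (HX × HY), fun z => WithLp.toLp 2 (f z, g z), fun x y => ?_⟩⟩
  rw [WithLp.prod_norm_sq_eq_of_L2]
  change ‖f x - f y‖ ^ 2 + ‖g x - g y‖ ^ 2 = dist x y
  rcases cover x with hx | hx <;> rcases cover y with hy | hy
  · simp [hfX x hx, hfX y hy, hgX x hx, hgX y hy, isomX, Subtype.dist_eq]
  · simp [hfX x hx, hfY y hy, hgX x hx, hgY y hy, isomX, isomY, Subtype.dist_eq, hadd x hx y hy]
  · rw [dist_comm x y, hadd y hy x hx, dist_comm y a, dist_comm a x]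
    simp [hfY x hx, hfX y hy, hgY x hx, hgX y hy, isomX, isomY, Subtype.dist_eq]
  · simp [hfY x hx, hfY y hy, hgY x hx, hgY y hy, isomY, Subtype.dist_eq]
end

section
/- Let (Z,d) be a compact metric space and X, Y ⊆ Z closed subsets with X ∪ Y = Z and X ∩ Y = {a} for some point a, such that d(x,y) = d(x,a) + d(a,y) for every x ∈ X and y ∈ Y. Suppose w₁ is a finite signed Borel measure on Z supported in X with ∫ e^{−d(x,y)} dw₁(y) = 1 for every x ∈ X, and w₂ is a finite signed Borel measure on Z supported in Y with ∫ e^{−d(x,y)} dw₂(y) = 1 for every x ∈ Y. Then the measure w = w₁ + w₂ − δ_a satisfies ∫ e^{−d(x,y)} dw(y) = 1 for every x ∈ Z; in particular w(Z) = w₁(X) + w₂(Y) − 1. -/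
open MeasureTheory Real

section SignedIntegral

variable {Z : Type*} [TopologicalSpace Z] [CompactSpace Z] [MeasurableSpace Z] [BorelSpace Z]

theorem Continuous.integrable_of_compactSpace_s10 {f : Z → ℝ} (hf : Continuous f) (μ : Measure Z)
    [IsFiniteMeasure μ] : Integrable f μ := by
  rw [← integrableOn_univ]
  refine Measure.integrableOn_of_bounded (measure_ne_top _ _) hf.aestronglyMeasurable
    (M := ‖BoundedContinuousFunction.mkOfCompact ⟨f, hf⟩‖) (ae_of_all _ fun x => ?_)
  exact (BoundedContinuousFunction.mkOfCompact ⟨f, hf⟩).norm_coe_le_norm x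

/-- The signed integral can be computed from any decomposition into finite measures. -/
theorem sInt_eq_sub {s : SignedMeasure Z} {μ ν : Measure Z} [IsFiniteMeasure μ]
    [IsFiniteMeasure ν] (hs : s = μ.toSignedMeasure - ν.toSignedMeasure) {f : Z → ℝ}
    (hf : Continuous f) : sInt s f = ∫ x, f x ∂μ - ∫ x, f x ∂ν := by
  have hJ : s.toJordanDecomposition.posPart.toSignedMeasure
      - s.toJordanDecomposition.negPart.toSignedMeasure = s :=
    s.toSignedMeasure_toJordanDecomposition
  have hm : s.toJordanDecomposition.posPart + ν = μ + s.toJordanDecomposition.negPart := by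
    rw [← Measure.toSignedMeasure_eq_toSignedMeasure_iff, Measure.toSignedMeasure_add,
      Measure.toSignedMeasure_add, ← sub_eq_sub_iff_add_eq_add, hJ, hs]
  have hfm := congrArg (fun m : Measure Z => ∫ x, f x ∂m) hm
  rw [integral_add_measure (hf.integrable_of_compactSpace_s10 _) (hf.integrable_of_compactSpace_s10 _),
    integral_add_measure (hf.integrable_of_compactSpace_s10 _) (hf.integrable_of_compactSpace_s10 _)]
    at hfm
  unfold sInt
  linarith

theorem sInt_add (s t : SignedMeasure Z) {f : Z → ℝ} (hf : Continuous f) :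
    sInt (s + t) f = sInt s f + sInt t f := by
  have hs := s.toSignedMeasure_toJordanDecomposition
  have ht := t.toSignedMeasure_toJordanDecomposition
  rw [sInt_eq_sub (μ := s.toJordanDecomposition.posPart + t.toJordanDecomposition.posPart)
    (ν := s.toJordanDecomposition.negPart + t.toJordanDecomposition.negPart) _ hf,
    integral_add_measure (hf.integrable_of_compactSpace_s10 _) (hf.integrable_of_compactSpace_s10 _),
    integral_add_measure (hf.integrable_of_compactSpace_s10 _) (hf.integrable_of_compactSpace_s10 _)]
  · unfold sInt
    ring
  · rw [Measure.toSignedMeasure_add, Measure.toSignedMeasure_add, add_sub_add_comm]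
    exact congrArg₂ (· + ·) hs.symm ht.symm

theorem sInt_sub_toSignedMeasure (s : SignedMeasure Z) (ν : Measure Z) [IsFiniteMeasure ν]
    {f : Z → ℝ} (hf : Continuous f) :
    sInt (s - ν.toSignedMeasure) f = sInt s f - ∫ x, f x ∂ν := by
  have hs := s.toSignedMeasure_toJordanDecomposition
  rw [sInt_eq_sub (μ := s.toJordanDecomposition.posPart)
    (ν := s.toJordanDecomposition.negPart + ν) _ hf,
    integral_add_measure (hf.integrable_of_compactSpace_s10 _) (hf.integrable_of_compactSpace_s10 _)]
  · unfold sInt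
    ring
  · rw [Measure.toSignedMeasure_add, ← sub_sub]
    exact congrArg (· - ν.toSignedMeasure) hs.symm

end SignedIntegral

section Support

variable {Z : Type*} [MeasurableSpace Z]

theorem posPart_negPart_compl_eq_zero {s : SignedMeasure Z} {S : Set Z} (hS : MeasurableSet S)
    (h : ∀ A : Set Z, MeasurableSet A → A ⊆ Sᶜ → s A = 0) :
    s.toJordanDecomposition.posPart Sᶜ = 0 ∧ s.toJordanDecomposition.negPart Sᶜ = 0 := by
  obtain ⟨i, hi, hpos, hneg, hp, hn⟩ := s.toJordanDecomposition_spec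
  rw [hp, hn, SignedMeasure.toMeasureOfZeroLE_apply _ hpos hi hS.compl,
    SignedMeasure.toMeasureOfLEZero_apply _ hneg hi.compl hS.compl]
  constructor
  · rw [ENNReal.coe_eq_zero, ← NNReal.coe_eq_zero]
    exact h _ (hi.inter hS.compl) Set.inter_subset_right
  · rw [ENNReal.coe_eq_zero, ← NNReal.coe_eq_zero]
    exact neg_eq_zero.2 (h _ (hi.compl.inter hS.compl) Set.inter_subset_right)

theorem sInt_congr_of_eqOn {s : SignedMeasure Z} {S : Set Z} (hS : MeasurableSet S)
    (h : ∀ A : Set Z, MeasurableSet A → A ⊆ Sᶜ → s A = 0) {f g : Z → ℝ} (hfg : Set.EqOn f g S) :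
    sInt s f = sInt s g := by
  obtain ⟨hp, hn⟩ := posPart_negPart_compl_eq_zero hS h
  unfold sInt
  congr 1
  · exact integral_congr_ae (Filter.mem_of_superset (mem_ae_iff.2 hp) hfg)
  · exact integral_congr_ae (Filter.mem_of_superset (mem_ae_iff.2 hn) hfg)

theorem sInt_const_mul (s : SignedMeasure Z) (c : ℝ) (f : Z → ℝ) :
    sInt s (fun y => c * f y) = c * sInt s f := by
  simp only [sInt, integral_const_mul, mul_sub]

theorem signedMeasure_univ_eq {s : SignedMeasure Z} {S : Set Z} (hS : MeasurableSet S)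
    (h : ∀ A : Set Z, MeasurableSet A → A ⊆ Sᶜ → s A = 0) : s Set.univ = s S := by
  rw [← VectorMeasure.of_add_of_sdiff hS MeasurableSet.univ (Set.subset_univ S),
    ← Set.compl_eq_univ_sdiff, h _ hS.compl subset_rfl, add_zero]

/-- The potential of a weight on `S` at a point whose distances to `S` are measured through `a`. -/
theorem sInt_exp_neg_dist_of_dist_add [MetricSpace Z] {s : SignedMeasure Z} {S : Set Z}
    (hS : MeasurableSet S) (h : ∀ A : Set Z, MeasurableSet A → A ⊆ Sᶜ → s A = 0) {a x : Z}
    (ha : sInt s (fun y => Real.exp (-dist a y)) = 1)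
    (hx : ∀ y ∈ S, dist x y = dist x a + dist a y) :
    sInt s (fun y => Real.exp (-dist x y)) = Real.exp (-dist x a) := by
  rw [sInt_congr_of_eqOn hS h (g := fun y => Real.exp (-dist x a) * Real.exp (-dist a y)),
    sInt_const_mul, ha, mul_one]
  intro y hy
  simp only
  rw [hx y hy, neg_add, Real.exp_add]

end Support

theorem stmt10 {Z : Type*} [MetricSpace Z] [CompactSpace Z]
    [MeasurableSpace Z] [BorelSpace Z]
    (X Y : Set Z) (a : Z) (hX : IsClosed X) (hY : IsClosed Y)
    (hunion : X ∪ Y = Set.univ) (hinter : X ∩ Y = {a})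
    (hadd : ∀ x ∈ X, ∀ y ∈ Y, dist x y = dist x a + dist a y)
    (w₁ w₂ : SignedMeasure Z)
    (hw₁supp : ∀ A : Set Z, MeasurableSet A → A ⊆ Xᶜ → w₁ A = 0)
    (hw₂supp : ∀ A : Set Z, MeasurableSet A → A ⊆ Yᶜ → w₂ A = 0)
    (hw₁ : ∀ x ∈ X, sInt w₁ (fun y => Real.exp (-dist x y)) = 1)
    (hw₂ : ∀ x ∈ Y, sInt w₂ (fun y => Real.exp (-dist x y)) = 1) :
    (∀ x : Z, sInt (w₁ + w₂ - (Measure.dirac a).toSignedMeasure)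
        (fun y => Real.exp (-dist x y)) = 1) ∧
    (w₁ + w₂ - (Measure.dirac a).toSignedMeasure) Set.univ
      = w₁ X + w₂ Y - 1 := by
  have ha : a ∈ X ∩ Y := hinter ▸ Set.mem_singleton a
  refine ⟨fun x => ?_, ?_⟩
  · have hf : Continuous fun y => Real.exp (-dist x y) := by fun_prop
    rw [sInt_sub_toSignedMeasure _ _ hf, sInt_add _ _ hf, integral_dirac]
    rcases (hunion ▸ Set.mem_univ x : x ∈ X ∪ Y) with hx | hx
    · rw [hw₁ x hx, sInt_exp_neg_dist_of_dist_add hY.measurableSet hw₂supp (hw₂ a ha.2) (hadd x hx)]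
      ring
    · rw [hw₂ x hx, sInt_exp_neg_dist_of_dist_add hX.measurableSet hw₁supp (hw₁ a ha.1)]
      · ring
      · intro y hy
        rw [dist_comm x y, hadd y hy x hx, dist_comm y a, dist_comm a x, add_comm]
  · rw [sub_apply, add_apply,
      signedMeasure_univ_eq hX.measurableSet hw₁supp,
      signedMeasure_univ_eq hY.measurableSet hw₂supp,
      Measure.toSignedMeasure_apply_measurable MeasurableSet.univ]
    simp
end

section
/- Let G be a finite tree (a connected acyclic simple graph) on a vertex set V with at least one vertex, let ℓ assign to each edge e of G a positive real length, and let d be the associated tree metric on V. Define w : V → ℝ by w(x) = Σ_{e ∋ x} 1/(1 + e^{−ℓ(e)}) − (deg(x) − 1), where the sum is over edges incident to x and deg(x) is the degree of x. Then for every x ∈ V, Σ_{y ∈ V} e^{−d(x,y)} w(y) = 1, and moreover Σ_{x ∈ V} w(x) = 1 + Σ_{e} tanh(ℓ(e)/2), the last sum being over all edges of G. -/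
open Finset Real

namespace SimpleGraph

variable {V : Type*} {G : SimpleGraph V}

/-- In a tree rooted at `x`, sending each vertex other than the root to the edge towards its parent
is a bijection onto the edges. -/
theorem IsTree.exists_parent (hG : G.IsTree) (x : V) :
    ∃ parent : V → V,
      (∀ y, y ≠ x → ∃ (q : G.Walk x (parent y)) (h : G.Adj (parent y) y), (q.concat h).IsPath) ∧
      Set.BijOn (fun y => s(parent y, y)) {x}ᶜ G.edgeSet := by
  choose p hp hp' using (hG.existsUnique_path x ·)
  have key : ∀ y, y ≠ x → ∃ h : G.Adj (p y).penultimate y,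
      p y = (p (p y).penultimate).concat h := by
    intro y hy
    have hnil : ¬ (p y).Nil := Walk.not_nil_of_ne hy.symm
    exact ⟨(p y).adj_penultimate hnil, hG.isAcyclic.path_concat (hp _) (hp _) _
      ((p y).getVert_mem_support _)⟩
  have hlen : ∀ y, y ≠ x → (p y).length = (p (p y).penultimate).length + 1 := by
    intro y hy
    obtain ⟨h, e⟩ := key y hy
    conv_lhs => rw [e, Walk.length_concat]
  refine ⟨fun y => (p y).penultimate, fun y hy => ?_, fun y hy => ?_, ?_, ?_⟩
  · obtain ⟨h, e⟩ := key y hy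
    exact ⟨p _, h, e ▸ hp y⟩
  · exact (key y hy).1
  · intro a ha b hb hab
    obtain ⟨-, h⟩ | ⟨h₁, h₂⟩ := by simpa using hab
    · exact h
    · have h₃ := hlen a ha
      have h₄ := hlen b hb
      rw [h₁] at h₃
      rw [← h₂] at h₄
      omega
  · have surj : ∀ a b, G.Adj a b → a ∈ (p b).support →
        s(a, b) ∈ (fun y => s((p y).penultimate, y)) '' {x}ᶜ := by
      intro a b hab ha
      have e := hG.isAcyclic.path_concat (hp a) (hp b) hab ha
      refine ⟨b, ?_, by simp [e]⟩
      rintro rfl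
      have := congrArg Walk.length (e.symm.trans (hp' _ _ Walk.IsPath.nil).symm)
      simp at this
    intro e
    induction e using Sym2.ind with | _ a b
    intro hab
    by_cases ha : a ∈ (p b).support
    · exact surj a b hab ha
    · rw [Sym2.eq_swap]
      exact surj b a hab.symm
        (hG.isAcyclic.mem_support_of_ne_mem_support_of_adj_of_isPath (hp a) (hp b) hab ha)

theorem sum_sum_incidenceFinset [Fintype V] [DecidableEq V] [DecidableRel G.Adj]
    {M : Type*} [AddCommMonoid M] (f : V → Sym2 V → M) :
    ∑ v, ∑ e ∈ G.incidenceFinset v, f v e = ∑ e ∈ G.edgeFinset, ∑ v ∈ e.toFinset, f v e :=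
  Finset.sum_comm' fun v e => by simp [incidenceFinset_eq_filter, and_comm]

end SimpleGraph

theorem Real.tanh_half (t : ℝ) : tanh (t / 2) = 1 - 2 * (exp (-t) / (1 + exp (-t))) := by
  have h : exp (-t) = exp (-(t / 2)) * exp (-(t / 2)) := by rw [← exp_add]; ring_nf
  have h' : exp (t / 2) * exp (-(t / 2)) = 1 := by rw [← exp_add]; simp
  have h₁ := exp_pos (t / 2)
  have h₂ := exp_pos (-(t / 2))
  rw [tanh_eq, h]
  generalize exp (t / 2) = a at *
  generalize exp (-(t / 2)) = b at *
  field_simp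
  linear_combination (2 * b) * h'

theorem stmt11 {V : Type*} [Fintype V] [DecidableEq V] [Nonempty V]
    (G : SimpleGraph V) [DecidableRel G.Adj] (hG : G.IsTree)
    (ℓ : Sym2 V → ℝ) (hℓ : ∀ e ∈ G.edgeSet, 0 < ℓ e)
    (d : V → V → ℝ)
    (hd : ∀ (x y : V) (p : G.Walk x y), p.IsPath → d x y = (p.edges.map ℓ).sum)
    (w : V → ℝ)
    (hw : ∀ x : V, w x =
      (∑ e ∈ G.incidenceFinset x, 1 / (1 + Real.exp (-ℓ e))) - ((G.degree x : ℝ) - 1)) :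
    (∀ x : V, ∑ y : V, Real.exp (-d x y) * w y = 1) ∧
    ∑ x : V, w x = 1 + ∑ e ∈ G.edgeFinset, Real.tanh (ℓ e / 2) := by
  have hw' : ∀ x, w x = 1 - ∑ e ∈ G.incidenceFinset x, exp (-ℓ e) / (1 + exp (-ℓ e)) := by
    intro x
    have h : ∀ e, 1 / (1 + exp (-ℓ e)) = 1 - exp (-ℓ e) / (1 + exp (-ℓ e)) := by
      intro e
      have := exp_pos (-ℓ e)
      field_simp
      ring
    rw [hw, Finset.sum_congr rfl fun e _ => h e, Finset.sum_sub_distrib, Finset.sum_const,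
      G.card_incidenceFinset_eq_degree]
    simp
  constructor
  · intro x
    obtain ⟨parent, hpath, hbij⟩ := hG.exists_parent x
    have hedge : ∑ e ∈ G.edgeFinset, ∑ y ∈ e.toFinset,
        exp (-d x y) * (exp (-ℓ e) / (1 + exp (-ℓ e))) = ∑ y ∈ {x}ᶜ, exp (-d x y) := by
      symm
      refine Finset.sum_nbij (fun y => s(parent y, y)) ?_ ?_ ?_ ?_
      · intro y hy
        simpa using hbij.mapsTo (by simpa using hy : y ∈ ({x}ᶜ : Set V))
      · simpa using hbij.injOn
      · simpa using hbij.surjOn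
      · intro y hy
        obtain ⟨q, h, hq⟩ := hpath y (by simpa using hy)
        have hdy : d x y = d x (parent y) + ℓ s(parent y, y) := by
          rw [hd x y _ hq, hd x _ q (SimpleGraph.Walk.IsPath.of_append_left hq)]
          simp [SimpleGraph.Walk.edges_concat]
        have := exp_pos (-ℓ s(parent y, y))
        rw [Sym2.toFinset_mk_eq, Finset.sum_pair h.ne, hdy, neg_add, exp_add]
        field_simp
    have hxx : d x x = 0 := by simpa using hd x x _ SimpleGraph.Walk.IsPath.nil
    simp_rw [hw', mul_sub, mul_one, Finset.mul_sum]
    rw [Finset.sum_sub_distrib, SimpleGraph.sum_sum_incidenceFinset, hedge,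
      ← Finset.sum_add_sum_compl {x} fun y => exp (-d x y)]
    simp [hxx]
  · have hcard : (Fintype.card V : ℝ) = 1 + #G.edgeFinset := by
      rw [← hG.card_edgeFinset]; push_cast; ring
    have hedge : ∀ e ∈ G.edgeFinset,
        ∑ v ∈ e.toFinset, exp (-ℓ e) / (1 + exp (-ℓ e)) =
          2 * (exp (-ℓ e) / (1 + exp (-ℓ e))) := by
      intro e he
      rw [Finset.sum_const,
        Sym2.card_toFinset_of_not_isDiag e (G.not_isDiag_of_mem_edgeFinset he), nsmul_eq_mul]
      simp
    simp_rw [hw', Real.tanh_half]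
    rw [Finset.sum_sub_distrib, SimpleGraph.sum_sum_incidenceFinset, Finset.sum_congr rfl hedge,
      Finset.sum_sub_distrib]
    simp [hcard]
    ring
end

section
/- Let G be a finite tree on a vertex set V with positive edge lengths ℓ and tree metric d, and let Z be the V × V matrix with entries Z(x,y) = e^{−d(x,y)}. Define the V × V matrix M by: M(x,x) = 1 + Σ_{e ∋ x} e^{−2ℓ(e)}/(1 − e^{−2ℓ(e)}) for every x ∈ V; M(x,y) = −e^{−ℓ(e)}/(1 − e^{−2ℓ(e)}) whenever x ≠ y are adjacent and e = {x,y} is the edge joining them; and M(x,y) = 0 whenever x ≠ y are not adjacent. Then M·Z is the identity matrix, i.e. M = Z⁻¹. -/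
open Finset Real

/-- In an acyclic graph, a neighbour of the start of a path that lies on the path is its second
vertex. -/
theorem SimpleGraph.IsAcyclic.eq_of_adj_of_mem_support_cons {V : Type*} {G : SimpleGraph V}
    (hG : G.IsAcyclic) {x v w y : V} {h : G.Adj x v} {p : G.Walk v y}
    (hp : (SimpleGraph.Walk.cons h p).IsPath) (hw : G.Adj x w)
    (hmem : w ∈ (SimpleGraph.Walk.cons h p).support) : w = v := by
  classical
  rw [SimpleGraph.Walk.cons_isPath_iff] at hp
  have hwp : w ∈ p.support := by
    rw [SimpleGraph.Walk.support_cons, List.mem_cons] at hmem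
    exact hmem.resolve_left hw.ne'
  have hq : (SimpleGraph.Walk.cons h (p.takeUntil w hwp)).IsPath :=
    (SimpleGraph.Walk.cons_isPath_iff _ _).2 ⟨hp.1.takeUntil hwp,
      fun hx => hp.2 (p.support_takeUntil_subset_support hwp hx)⟩
  have heq := (hG.subsingleton_path x w).elim ⟨_, hq⟩ (SimpleGraph.Path.singleton hw)
  simpa [SimpleGraph.Path.singleton] using
    (congrArg (fun r : G.Path x w => r.1.snd) heq).symm

/-- A sum over the edges at `x` is a sum over the neighbours of `x`. -/
theorem SimpleGraph.sum_incidenceFinset_eq_sum_neighborFinset {V R : Type*} [Fintype V]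
    [DecidableEq V] [AddCommMonoid R] (G : SimpleGraph V) [DecidableRel G.Adj] (x : V)
    (f : Sym2 V → R) :
    ∑ e ∈ G.incidenceFinset x, f e = ∑ w ∈ G.neighborFinset x, f s(x, w) := by
  symm
  refine Finset.sum_bij (fun w _ => s(x, w)) ?_ ?_ ?_ (fun _ _ => rfl)
  · intro w hw
    simpa [SimpleGraph.mem_incidenceFinset, SimpleGraph.mk'_mem_incidenceSet_iff] using hw
  · intro a _ b _ h
    exact Sym2.congr_right.1 h
  · intro e he
    rw [SimpleGraph.mem_incidenceFinset] at he
    obtain ⟨w, rfl⟩ := he.2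
    exact ⟨w, by simpa using he.1, rfl⟩

theorem stmt12 {V : Type*} [Fintype V] [DecidableEq V] [Nonempty V]
    (G : SimpleGraph V) [DecidableRel G.Adj] (hG : G.IsTree)
    (ℓ : Sym2 V → ℝ) (hℓ : ∀ e ∈ G.edgeSet, 0 < ℓ e)
    (d : V → V → ℝ)
    (hd : ∀ (x y : V) (p : G.Walk x y), p.IsPath → d x y = (p.edges.map ℓ).sum)
    (M : Matrix V V ℝ)
    (hMdiag : ∀ x : V, M x x =
      1 + ∑ e ∈ G.incidenceFinset x, Real.exp (-(2 * ℓ e)) / (1 - Real.exp (-(2 * ℓ e))))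
    (hMadj : ∀ x y : V, G.Adj x y →
      M x y = -(Real.exp (-ℓ s(x, y)) / (1 - Real.exp (-(2 * ℓ s(x, y))))))
    (hMnonadj : ∀ x y : V, x ≠ y → ¬G.Adj x y → M x y = 0) :
    M * Matrix.of (fun x y : V => Real.exp (-d x y)) = 1 := by
  ext x y
  rw [Matrix.mul_apply]
  simp only [Matrix.of_apply]
  have hsq (e : Sym2 V) : exp (-(2 * ℓ e)) = exp (-ℓ e) * exp (-ℓ e) := by
    rw [← Real.exp_add]; ring_nf
  have hexpand : ∑ w, M x w * exp (-d w y) = exp (-d x y) +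
      ∑ w ∈ G.neighborFinset x,
        (exp (-(2 * ℓ s(x, w))) / (1 - exp (-(2 * ℓ s(x, w)))) * exp (-d x y)
          + M x w * exp (-d w y)) := by
    have hsupp : ∑ w ∈ insert x (G.neighborFinset x), M x w * exp (-d w y)
        = ∑ w, M x w * exp (-d w y) := by
      refine Finset.sum_subset (Finset.subset_univ _) fun w _ hw => ?_
      simp only [Finset.mem_insert, SimpleGraph.mem_neighborFinset, not_or] at hw
      rw [hMnonadj x w (Ne.symm hw.1) hw.2, zero_mul]
    rw [← hsupp, Finset.sum_insert (by simp), hMdiag,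
      G.sum_incidenceFinset_eq_sum_neighborFinset, Finset.sum_add_distrib, ← Finset.sum_mul]
    ring
  have hden {w : V} (hw : G.Adj x w) : 1 - exp (-ℓ s(x, w)) * exp (-ℓ s(x, w)) ≠ 0 := by
    have hlt : exp (-(2 * ℓ s(x, w))) < 1 :=
      Real.exp_lt_one_iff.2 (by linarith [hℓ s(x, w) hw])
    rw [hsq] at hlt
    exact (sub_pos.2 hlt).ne'
  have haway {p : G.Walk x y} (hp : p.IsPath) {w : V} (hw : G.Adj x w) (hwp : w ∉ p.support) :
      exp (-(2 * ℓ s(x, w))) / (1 - exp (-(2 * ℓ s(x, w)))) * exp (-d x y)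
        + M x w * exp (-d w y) = 0 := by
    have hdw : exp (-d w y) = exp (-ℓ s(x, w)) * exp (-d x y) := by
      rw [hd w y (.cons hw.symm p) (hp.cons hwp), hd x y p hp, ← Real.exp_add,
        SimpleGraph.Walk.edges_cons, List.map_cons, List.sum_cons, Sym2.eq_swap, neg_add]
    rw [hMadj x w hw, hdw, hsq]
    ring
  rw [hexpand]
  obtain ⟨p, hp⟩ := hG.connected.preconnected.exists_isPath x y
  cases p with
  | nil =>
    rw [Finset.sum_eq_zero, hd x x .nil hp]
    · simp
    · intro w hw
      rw [SimpleGraph.mem_neighborFinset] at hw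
      exact haway hp hw (by simpa using hw.ne')
  | @cons _ v _ h p =>
    have hne : x ≠ y := by
      rintro rfl
      exact ((SimpleGraph.Walk.cons_isPath_iff _ _).1 hp).2 p.end_mem_support
    rw [Finset.sum_eq_single_of_mem v (by simpa using h), Matrix.one_apply_ne hne]
    · have hdx : exp (-d x y) = exp (-ℓ s(x, v)) * exp (-d v y) := by
        rw [hd x y _ hp, hd v y p hp.of_cons, ← Real.exp_add,
          SimpleGraph.Walk.edges_cons, List.map_cons, List.sum_cons, neg_add]
      have hv := hden h
      rw [hMadj x v h, hdx, hsq]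
      generalize exp (-ℓ s(x, v)) = q at hv ⊢
      rw [← sq] at hv ⊢
      field_simp
      ring
    · intro w hw hwv
      rw [SimpleGraph.mem_neighborFinset] at hw
      exact haway hp hw fun hmem =>
        hwv (hG.isAcyclic.eq_of_adj_of_mem_support_cons hp hw hmem)
end

section
/- Let X be an ℝ-tree. Then Sk(X) = X \ Leaves(X): a point p ∈ X lies on some open geodesic segment ]x,y[ with x, y ∈ X if and only if X \ {p} is not preconnected (i.e. p is not a leaf). -/
/-- `S` is a geodesic segment from `x` to `y`: the image of an isometric embedding
`γ : [0, d(x,y)] → X` with `γ 0 = x` and `γ (d(x,y)) = y`. -/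
def IsGeodesicSegment {X : Type*} [MetricSpace X] (x y : X) (S : Set X) : Prop :=
  ∃ γ : ℝ → X, γ 0 = x ∧ γ (dist x y) = y ∧
    (∀ s ∈ Set.Icc (0 : ℝ) (dist x y), ∀ t ∈ Set.Icc (0 : ℝ) (dist x y),
      dist (γ s) (γ t) = |s - t|) ∧
    S = γ '' Set.Icc (0 : ℝ) (dist x y)

namespace IsGeodesicSegment

variable {X : Type*} [MetricSpace X] {x y q : X} {S : Set X}

theorem left_mem (h : IsGeodesicSegment x y S) : x ∈ S := by
  obtain ⟨γ, h0, -, -, rfl⟩ := h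
  exact ⟨0, ⟨le_rfl, dist_nonneg⟩, h0⟩

theorem right_mem (h : IsGeodesicSegment x y S) : y ∈ S := by
  obtain ⟨γ, -, h1, -, rfl⟩ := h
  exact ⟨dist x y, ⟨dist_nonneg, le_rfl⟩, h1⟩

theorem dist_left_le (h : IsGeodesicSegment x y S) (hq : q ∈ S) :
    dist x q ≤ dist x y := by
  obtain ⟨γ, h0, -, hiso, rfl⟩ := h
  obtain ⟨t, ht, rfl⟩ := hq
  have h := hiso 0 ⟨le_rfl, dist_nonneg⟩ t ht
  rw [h0, zero_sub, abs_neg, abs_of_nonneg ht.1] at h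
  exact h.trans_le ht.2

theorem dist_right_le (h : IsGeodesicSegment x y S) (hq : q ∈ S) :
    dist q y ≤ dist x y := by
  obtain ⟨γ, -, h1, hiso, rfl⟩ := h
  obtain ⟨t, ht, rfl⟩ := hq
  have h := hiso t ht (dist x y) ⟨dist_nonneg, le_rfl⟩
  rw [h1, abs_of_nonpos (by linarith [ht.2])] at h
  linarith [ht.1]

theorem isPreconnected (h : IsGeodesicSegment x y S) : IsPreconnected S := by
  obtain ⟨γ, -, -, hiso, rfl⟩ := h
  refine isPreconnected_Icc.image γ (LipschitzOnWith.continuousOn (K := 1) ?_)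
  refine LipschitzOnWith.of_dist_le_mul fun s hs t ht => ?_
  rw [hiso s hs t ht, Real.dist_eq, NNReal.coe_one, one_mul]

end IsGeodesicSegment

theorem stmt17 {X : Type*} [MetricSpace X]
    (seg : X → X → Set X)
    (hseg : ∀ x y : X, IsGeodesicSegment x y (seg x y))
    (huniq : ∀ (x y : X) (S : Set X), IsGeodesicSegment x y S → S = seg x y)
    (htree : ∀ x y z : X, seg x z ⊆ seg x y ∪ seg y z)
    (p : X) :
    (∃ x y : X, p ∈ seg x y \ {x, y}) ↔ ¬ IsPreconnected ({p}ᶜ : Set X) := by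
  constructor
  · rintro ⟨x, y, hp, hne⟩ hconn
    simp only [Set.mem_insert_iff, Set.mem_singleton_iff, not_or] at hne
    have hU : IsOpen {z | p ∉ seg x z} := by
      refine Metric.isOpen_iff.2 fun z hz => ?_
      have hzp : z ≠ p := fun h => hz (h ▸ (hseg x z).right_mem)
      refine ⟨dist z p, dist_pos.2 hzp, fun w hw hpw => ?_⟩
      rw [Metric.mem_ball, dist_comm] at hw
      rcases htree x z w hpw with h | h
      · exact hz h
      · exact hw.not_ge ((hseg z w).dist_left_le h)
    have hV : IsOpen {z | z ≠ p ∧ p ∈ seg x z} := by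
      refine Metric.isOpen_iff.2 fun z hz => ⟨dist z p, dist_pos.2 hz.1, fun w hw => ?_⟩
      rw [Metric.mem_ball, dist_comm z p] at hw
      refine ⟨fun h => hw.ne (h ▸ rfl), ?_⟩
      rcases htree x w z hz.2 with h | h
      · exact h
      · exact absurd ((hseg w z).dist_right_le h) hw.not_ge
    have hxU : p ∉ seg x x := fun h => by
      have hle := (hseg x x).dist_left_le h
      rw [dist_self] at hle
      exact hne.1 (dist_le_zero.1 hle).symm
    obtain ⟨z, -, hzU, hzV⟩ := hconn _ _ hU hV
      (fun z hz => (em (p ∈ seg x z)).symm.imp id fun h => ⟨hz, h⟩)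
      ⟨x, Ne.symm hne.1, hxU⟩ ⟨y, Ne.symm hne.2, Ne.symm hne.2, hp⟩
    exact hzU hzV.2
  · contrapose!
    intro h
    refine isPreconnected_of_forall_pair fun x hx y hy => ?_
    refine ⟨seg x y, fun z hz hzp => ?_, (hseg x y).left_mem, (hseg x y).right_mem,
      (hseg x y).isPreconnected⟩
    rw [Set.mem_singleton_iff] at hzp
    subst hzp
    refine h x y ⟨hz, ?_⟩
    rintro (rfl | rfl)
    exacts [hx rfl, hy rfl]
end

section
/- Let X be a compact ℝ-tree and let μ be a diversity-maximizing probability measure on X. Then no branch point of X belongs to the support of μ: if z ∈ X is such that X \ {z} has at least three connected components, then z ∉ supp μ. -/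
open MeasureTheory Real

/-- The support of a Borel measure: points all of whose open neighbourhoods have
positive measure. -/
def measSupport {X : Type*} [TopologicalSpace X] [MeasurableSpace X]
    (μ : Measure X) : Set X :=
  {x | ∀ U : Set X, IsOpen U → x ∈ U → 0 < μ U}

/-- The potential `x ↦ ∫ e^{-d(x,y)} dμ(y)` of a measure. -/
noncomputable def simPotential {X : Type*} [MetricSpace X] [MeasurableSpace X]
    (μ : Measure X) (x : X) : ℝ :=
  ∫ y, Real.exp (-dist x y) ∂μ

section Potential

variable {X : Type*} [MetricSpace X] [CompactSpace X] [MeasurableSpace X] [BorelSpace X]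

theorem integrable_of_continuous (μ : Measure X) [IsFiniteMeasure μ] {f : X → ℝ}
    (hf : Continuous f) : Integrable f μ :=
  hf.integrable_of_hasCompactSupport (HasCompactSupport.of_compactSpace f)

theorem integrable_exp_neg_dist (μ : Measure X) [IsFiniteMeasure μ] (x : X) :
    Integrable (fun y => Real.exp (-dist x y)) μ :=
  integrable_of_continuous μ (by fun_prop)

theorem continuous_simPotential (μ : Measure X) [IsFiniteMeasure μ] :
    Continuous (simPotential μ) := by
  refine continuous_of_dominated (bound := fun _ => 1)
    (fun x => (integrable_exp_neg_dist μ x).aestronglyMeasurable) (fun x => ?_)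
    (integrable_const 1) (Filter.Eventually.of_forall fun y => by fun_prop)
  refine Filter.Eventually.of_forall fun y => ?_
  rw [Real.norm_of_nonneg (Real.exp_nonneg _)]
  exact Real.exp_le_one_iff.2 (neg_nonpos.2 dist_nonneg)

theorem simFormP_mix_dirac (μ : Measure X) [IsFiniteMeasure μ] (p : X) {a b : ℝ}
    (ha : 0 ≤ a) (hb : 0 ≤ b) :
    simFormP (ENNReal.ofReal a • μ + ENNReal.ofReal b • Measure.dirac p)
        (ENNReal.ofReal a • μ + ENNReal.ofReal b • Measure.dirac p) =
      a ^ 2 * simFormP μ μ + 2 * a * b * simPotential μ p + b ^ 2 := by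
  have integral_mix : ∀ f : X → ℝ, Continuous f →
      ∫ x, f x ∂(ENNReal.ofReal a • μ + ENNReal.ofReal b • Measure.dirac p) =
        a * ∫ x, f x ∂μ + b * f p := by
    intro f hf
    rw [integral_add_measure
      ((integrable_of_continuous μ hf).smul_measure ENNReal.ofReal_ne_top)
      ((integrable_of_continuous _ hf).smul_measure ENNReal.ofReal_ne_top),
      integral_smul_measure, integral_smul_measure, integral_dirac,
      ENNReal.toReal_ofReal ha, ENNReal.toReal_ofReal hb, smul_eq_mul, smul_eq_mul]
  have hcont := continuous_simPotential μ
  have hexp : ∫ x, Real.exp (-dist x p) ∂μ = simPotential μ p := by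
    simp only [simPotential, dist_comm]
  have hinner : ∀ x, ∫ y, Real.exp (-dist x y)
      ∂(ENNReal.ofReal a • μ + ENNReal.ofReal b • Measure.dirac p) =
        a * simPotential μ x + b * Real.exp (-dist x p) :=
    fun x => integral_mix _ (by fun_prop)
  have hform : simFormP μ μ = ∫ x, simPotential μ x ∂μ := rfl
  rw [simFormP]
  simp only [hinner]
  rw [integral_mix _ (by fun_prop),
    integral_add (integrable_of_continuous μ (by fun_prop))
      (integrable_of_continuous μ (by fun_prop)),
    integral_const_mul, integral_const_mul, hexp, hform]
  simp only [dist_self, neg_zero, Real.exp_zero]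
  ring

/-- The potential of a diversity-maximizing measure is bounded below by its energy. -/
theorem simFormP_le_simPotential (μ : Measure X) [IsProbabilityMeasure μ]
    (hmax : ∀ ν : Measure X, IsProbabilityMeasure ν → simFormP μ μ ≤ simFormP ν ν) (p : X) :
    simFormP μ μ ≤ simPotential μ p := by
  have hvar : ∀ s : ℝ, 0 < s → s < 1 →
      0 ≤ 2 * (simPotential μ p - simFormP μ μ) +
        s * (simFormP μ μ - 2 * simPotential μ p + 1) := by
    intro s hs0 hs1
    have hprob : IsProbabilityMeasure
        (ENNReal.ofReal (1 - s) • μ + ENNReal.ofReal s • Measure.dirac p) := by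
      constructor
      simp only [Measure.add_apply, Measure.smul_apply, measure_univ, smul_eq_mul, mul_one]
      rw [← ENNReal.ofReal_add (by linarith) hs0.le]
      simp
    have h := hmax _ hprob
    rw [simFormP_mix_dirac μ p (by linarith) hs0.le] at h
    refine nonneg_of_mul_nonneg_right ?_ hs0
    nlinarith
  by_contra! hlt
  set A := simPotential μ p
  set L := simFormP μ μ
  have hlim : Filter.Tendsto (fun s : ℝ => 2 * (A - L) + s * (L - 2 * A + 1))
      (nhdsWithin 0 (Set.Ioi 0)) (nhds (2 * (A - L) + 0 * (L - 2 * A + 1))) :=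
    (Continuous.tendsto (by fun_prop) 0).mono_left nhdsWithin_le_nhds
  have hge := ge_of_tendsto hlim (by
    filter_upwards [Ioo_mem_nhdsGT (zero_lt_one (α := ℝ))] with s hs
    exact hvar s hs.1 hs.2)
  linarith

/-- The potential of a diversity-maximizing measure equals its energy on the support. -/
theorem simPotential_eq_of_mem_measSupport (μ : Measure X) [IsProbabilityMeasure μ]
    (hmax : ∀ ν : Measure X, IsProbabilityMeasure ν → simFormP μ μ ≤ simFormP ν ν)
    {z : X} (hz : z ∈ measSupport μ) : simPotential μ z = simFormP μ μ := by
  have hcont := continuous_simPotential μ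
  have hle := simFormP_le_simPotential μ hmax
  by_contra hne
  have hlt : simFormP μ μ < simPotential μ z := lt_of_le_of_ne (hle z) (Ne.symm hne)
  have hpos := hz {x | simFormP μ μ < simPotential μ x}
    (isOpen_lt continuous_const hcont) hlt
  have hint : Integrable (fun x => simPotential μ x - simFormP μ μ) μ :=
    integrable_of_continuous μ (by fun_prop)
  have hzero : ∫ x, (simPotential μ x - simFormP μ μ) ∂μ = 0 := by
    rw [integral_sub (integrable_of_continuous μ hcont) (integrable_const _)]
    simp only [integral_const, probReal_univ, one_smul]
    exact sub_self _
  rw [integral_eq_zero_iff_of_nonneg (fun x => sub_nonneg.2 (hle x)) hint] at hzero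
  refine hpos.ne' (measure_mono_null (fun x hx => ?_) hzero)
  exact (sub_pos.2 hx).ne'

theorem simPotential_pos (μ : Measure X) [IsProbabilityMeasure μ] (x : X) :
    0 < simPotential μ x :=
  integral_exp_pos (integrable_exp_neg_dist μ x)

end Potential

section Geodesic

variable {X : Type*} [MetricSpace X]

theorem IsGeodesicSegment.isPreconnected_s19 {x y : X} {S : Set X}
    (h : IsGeodesicSegment x y S) : IsPreconnected S := by
  obtain ⟨γ, -, -, hγ, rfl⟩ := h
  refine isPreconnected_Icc.image γ (LipschitzOnWith.continuousOn (K := 1) ?_)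
  refine LipschitzOnWith.of_dist_le_mul fun s hs t ht => ?_
  rw [hγ s hs t ht, Real.dist_eq]
  simp

theorem IsGeodesicSegment.left_mem_s19 {x y : X} {S : Set X}
    (h : IsGeodesicSegment x y S) : x ∈ S := by
  obtain ⟨γ, h0, -, -, rfl⟩ := h
  exact ⟨0, ⟨le_rfl, dist_nonneg⟩, h0⟩

theorem IsGeodesicSegment.right_mem_s19 {x y : X} {S : Set X}
    (h : IsGeodesicSegment x y S) : y ∈ S := by
  obtain ⟨γ, -, h1, -, rfl⟩ := h
  exact ⟨dist x y, ⟨dist_nonneg, le_rfl⟩, h1⟩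

theorem IsGeodesicSegment.dist_add_dist {x y w : X} {S : Set X}
    (h : IsGeodesicSegment x y S) (hw : w ∈ S) : dist x w + dist w y = dist x y := by
  obtain ⟨γ, h0, h1, hγ, rfl⟩ := h
  obtain ⟨s, hs, rfl⟩ := hw
  have hx := hγ 0 ⟨le_rfl, dist_nonneg⟩ s hs
  have hy := hγ s hs _ ⟨dist_nonneg, le_rfl⟩
  rw [h0, zero_sub, abs_neg, abs_of_nonneg hs.1] at hx
  rw [h1, abs_of_nonpos (sub_nonpos.2 hs.2)] at hy
  linarith

theorem IsGeodesicSegment.exists_dist_eq {x y : X} {S : Set X}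
    (h : IsGeodesicSegment x y S) {t : ℝ} (ht0 : 0 ≤ t) (ht : t ≤ dist x y) :
    ∃ p ∈ S, dist x p = t := by
  obtain ⟨γ, h0, -, hγ, rfl⟩ := h
  refine ⟨γ t, ⟨t, ⟨ht0, ht⟩, rfl⟩, ?_⟩
  have hx := hγ 0 ⟨le_rfl, dist_nonneg⟩ t ⟨ht0, ht⟩
  rwa [h0, zero_sub, abs_neg, abs_of_nonneg ht0] at hx

/-- Points whose distance is shorter than the path through `z` lie in the same component of the
complement of `z`. -/
theorem connectedComponentIn_eq_of_dist_lt {z p y : X} {S : Set X}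
    (h : IsGeodesicSegment p y S) (hlt : dist p y < dist p z + dist z y) :
    connectedComponentIn ({z}ᶜ : Set X) p = connectedComponentIn ({z}ᶜ : Set X) y := by
  refine connectedComponentIn_eq
    (h.isPreconnected_s19.subset_connectedComponentIn h.left_mem_s19 ?_ h.right_mem_s19)
  rintro w hw rfl
  exact hlt.ne' (h.dist_add_dist hw)

/-- In direction of `x ≠ z`, there is a point at distance `t` from `z`, such that a point outside
the component of `x` is reached from it through `z`. -/
theorem exists_dist_eq_add_of_connectedComponentIn_ne
    (hgeo : ∀ x y : X, ∃ S, IsGeodesicSegment x y S) {z x : X} {t : ℝ} (ht0 : 0 < t)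
    (ht : t ≤ dist z x) :
    ∃ p, dist p z = t ∧ ∀ y,
      connectedComponentIn ({z}ᶜ : Set X) y ≠ connectedComponentIn ({z}ᶜ : Set X) x →
        dist p y = t + dist z y := by
  obtain ⟨S, hS⟩ := hgeo z x
  obtain ⟨p, hp, hpt⟩ := hS.exists_dist_eq ht0.le ht
  have hadd := hS.dist_add_dist hp
  rw [dist_comm] at hpt
  refine ⟨p, hpt, fun y hy => ?_⟩
  obtain ⟨T, hT⟩ := hgeo p y
  obtain ⟨R, hR⟩ := hgeo p x
  refine le_antisymm (hpt ▸ dist_triangle p z y) ?_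
  by_contra! hlt
  refine hy ?_
  rw [← connectedComponentIn_eq_of_dist_lt hT (hpt ▸ hlt)]
  refine connectedComponentIn_eq_of_dist_lt hR ?_
  rw [dist_comm z p] at hadd
  linarith

end Geodesic

theorem stmt19 {X : Type*} [MetricSpace X] [CompactSpace X]
    [MeasurableSpace X] [BorelSpace X]
    (seg : X → X → Set X)
    (hseg : ∀ x y : X, IsGeodesicSegment x y (seg x y))
    (huniq : ∀ (x y : X) (S : Set X), IsGeodesicSegment x y S → S = seg x y)
    (htree : ∀ x y z : X, seg x z ⊆ seg x y ∪ seg y z)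
    (μ : Measure X) (hμ : IsProbabilityMeasure μ)
    (hmax : ∀ ν : Measure X, IsProbabilityMeasure ν → simFormP μ μ ≤ simFormP ν ν)
    (z : X)
    (hbranch : ∃ x₁ x₂ x₃ : X, x₁ ∈ ({z}ᶜ : Set X) ∧ x₂ ∈ ({z}ᶜ : Set X) ∧
      x₃ ∈ ({z}ᶜ : Set X) ∧
      connectedComponentIn ({z}ᶜ : Set X) x₁ ≠ connectedComponentIn ({z}ᶜ : Set X) x₂ ∧
      connectedComponentIn ({z}ᶜ : Set X) x₁ ≠ connectedComponentIn ({z}ᶜ : Set X) x₃ ∧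
      connectedComponentIn ({z}ᶜ : Set X) x₂ ≠ connectedComponentIn ({z}ᶜ : Set X) x₃) :
    z ∉ measSupport μ := by
  intro hz
  obtain ⟨x₁, x₂, x₃, h₁, h₂, h₃, h₁₂, h₁₃, h₂₃⟩ := hbranch
  have hgeo : ∀ x y : X, ∃ S, IsGeodesicSegment x y S := fun x y => ⟨_, hseg x y⟩
  have hpos : ∀ x ∈ ({z}ᶜ : Set X), 0 < dist z x := fun x hx => dist_pos.2 (Ne.symm hx)
  obtain ⟨t, ht0, ht⟩ : ∃ t : ℝ, 0 < t ∧
      t < min (Real.log 2) (min (dist z x₁) (min (dist z x₂) (dist z x₃))) :=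
    exists_between (lt_min (Real.log_pos one_lt_two)
      (lt_min (hpos _ h₁) (lt_min (hpos _ h₂) (hpos _ h₃))))
  simp only [lt_min_iff] at ht
  obtain ⟨htlog, ht₁, ht₂, ht₃⟩ := ht
  obtain ⟨p₁, hd₁, hp₁⟩ := exists_dist_eq_add_of_connectedComponentIn_ne hgeo ht0 ht₁.le
  obtain ⟨p₂, hd₂, hp₂⟩ := exists_dist_eq_add_of_connectedComponentIn_ne hgeo ht0 ht₂.le
  obtain ⟨p₃, hd₃, hp₃⟩ := exists_dist_eq_add_of_connectedComponentIn_ne hgeo ht0 ht₃.le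
  have hsmall : Real.exp t < 2 := (Real.lt_log_iff_exp_lt two_pos).1 htlog
  have hone : 1 < Real.exp t := Real.one_lt_exp_iff.2 ht0
  have hinv : Real.exp (-t) * Real.exp t = 1 := by rw [← Real.exp_add]; simp
  have hnear : ∀ p y, dist p z = t →
      Real.exp (-dist p y) ≤ Real.exp t * Real.exp (-dist z y) := by
    intro p y hp
    rw [← Real.exp_add, Real.exp_le_exp]
    have := dist_triangle_left z y p
    linarith
  have hfar : ∀ p y, dist p y = t + dist z y →
      Real.exp (-dist p y) = Real.exp (-t) * Real.exp (-dist z y) := by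
    intro p y hp
    rw [← Real.exp_add, hp, neg_add]
  have hsum : ∀ y, Real.exp (-dist p₁ y) + Real.exp (-dist p₂ y) + Real.exp (-dist p₃ y) ≤
      (Real.exp t + 2 * Real.exp (-t)) * Real.exp (-dist z y) := by
    intro y
    by_cases c₁ : connectedComponentIn ({z}ᶜ : Set X) y = connectedComponentIn ({z}ᶜ : Set X) x₁
    · rw [hfar p₂ y (hp₂ y (c₁ ▸ h₁₂)), hfar p₃ y (hp₃ y (c₁ ▸ h₁₃))]
      linarith [hnear p₁ y hd₁]
    rw [hfar p₁ y (hp₁ y c₁)]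
    by_cases c₂ : connectedComponentIn ({z}ᶜ : Set X) y = connectedComponentIn ({z}ᶜ : Set X) x₂
    · rw [hfar p₃ y (hp₃ y (c₂ ▸ h₂₃))]
      linarith [hnear p₂ y hd₂]
    rw [hfar p₂ y (hp₂ y c₂)]
    linarith [hnear p₃ y hd₃]
  have hint := integrable_exp_neg_dist μ
  have hineq := integral_mono (((hint p₁).add (hint p₂)).add (hint p₃))
    ((hint z).const_mul (Real.exp t + 2 * Real.exp (-t))) hsum
  rw [integral_add' ((hint p₁).add (hint p₂)) (hint p₃), integral_add' (hint p₁) (hint p₂),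
    integral_const_mul] at hineq
  change simPotential μ p₁ + simPotential μ p₂ + simPotential μ p₃ ≤
    _ * simPotential μ z at hineq
  have hlower := simFormP_le_simPotential μ hmax
  rw [← simPotential_eq_of_mem_measSupport μ hmax hz] at hlower
  have hthree : 3 ≤ Real.exp t + 2 * Real.exp (-t) :=
    le_of_mul_le_mul_right (by linarith [hlower p₁, hlower p₂, hlower p₃])
      (simPotential_pos μ z)
  nlinarith [mul_pos (sub_pos.2 hone) (sub_pos.2 hsmall)]
end
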